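/- Let n ≥ 1 and let M be a subset of the edge set of the complete graph K_n such that the spanning subgraph of K_n with edge set M is a forest with c components (including isolated vertices) whose orders are n_1, n_2, ..., n_c. Then the number of spanning trees of K_n containing every edge of M equals n^{c-2} · n_1 · n_2 · ... · n_c. -/

import Mathlib

/-!
Spanning trees of multigraphs: common definitions.

A multigraph on a vertex type `V` with edge type `E` is given by an incidence
map `inc : E → Sym2 V` sending each edge to its (unordered) pair of endpoints.
-/

namespace PaperST

universe u v

/-- A multigraph on vertex type `V` with edge type `E`. -/
structure Multigraph (V : Type u) (E : Type v) where
  /-- the two (possibly equal) endpoints of each edge -/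
  inc : E → Sym2 V

namespace Multigraph

variable {V : Type u} {E : Type v}

/-- One step along an edge of `T`. -/
def Step (G : Multigraph V E) (T : Set E) (u v : V) : Prop :=
  ∃ e ∈ T, G.inc e = s(u, v)

theorem step_symm (G : Multigraph V E) (T : Set E) : Symmetric (G.Step T) := by
  rintro u v ⟨e, he, hinc⟩
  exact ⟨e, he, by rw [hinc]; exact Sym2.eq_swap⟩

/-- Reachability using only edges in `T`. -/
def Reach (G : Multigraph V E) (T : Set E) : V → V → Prop :=
  Relation.ReflTransGen (G.Step T)

/-- The spanning subgraph `G⟨T⟩` is connected. -/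
def ConnectedOn (G : Multigraph V E) (T : Set E) : Prop :=
  ∀ u v : V, G.Reach T u v

/-- `G` is connected. -/
def Connected (G : Multigraph V E) : Prop :=
  G.ConnectedOn Set.univ

/-- `G` has no loops. -/
def Loopless (G : Multigraph V E) : Prop :=
  ∀ e : E, ¬ (G.inc e).IsDiag

/-- A spanning tree of a (finite) multigraph: a connected spanning subgraph
with `|V| - 1` edges. -/
def IsSpanningTree (G : Multigraph V E) (T : Set E) : Prop :=
  G.ConnectedOn T ∧ T.ncard + 1 = Nat.card V

/-- The set `ST_G(M)` of spanning trees of `G` containing all edges of `M`. -/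
def ST (G : Multigraph V E) (M : Set E) : Set (Set E) :=
  {T | G.IsSpanningTree T ∧ M ⊆ T}

/-- `τ_G(M)`: the number of spanning trees of `G` containing all edges of `M`. -/
noncomputable def tau (G : Multigraph V E) (M : Set E) : ℕ :=
  (G.ST M).ncard

/-- The spanning subgraph `G⟨W⟩` is a forest (no cycles): there are no loops in
`W` and every edge of `W` is a bridge of `G⟨W⟩`. -/
def IsForest (G : Multigraph V E) (W : Set E) : Prop :=
  ∀ e ∈ W, ¬ (G.inc e).IsDiag ∧
    ∀ u v : V, G.inc e = s(u, v) → ¬ G.Reach (W \ {e}) u v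

/-- Edges with all endpoints in `U`: the edge set of the induced subgraph `G[U]`. -/
def edgesWithin (G : Multigraph V E) (U : Set V) : Set E :=
  {e | ∀ v ∈ G.inc e, v ∈ U}

/-- `E_G(U₁, U₂)`: edges with one end in `U₁` and the other end in `U₂`. -/
def edgesBetween (G : Multigraph V E) (U₁ U₂ : Set V) : Set E :=
  {e | ∃ u v, G.inc e = s(u, v) ∧ u ∈ U₁ ∧ v ∈ U₂}

/-- `E_G(U) = E_G(U, V − U)`: edges with one end in `U` and the other outside. -/
def edgeBoundary (G : Multigraph V E) (U : Set V) : Set E :=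
  G.edgesBetween U Uᶜ

/-- `U` is a clique of `G`: the induced subgraph `G[U]` is a complete graph,
i.e. exactly one edge joins each pair of distinct vertices of `U`, and there
are neither loops nor parallel edges inside `U`. -/
def IsClique (G : Multigraph V E) (U : Set V) : Prop :=
  (∀ u ∈ U, ∀ v ∈ U, u ≠ v → ∃! e : E, G.inc e = s(u, v)) ∧
    ∀ e ∈ G.edgesWithin U, ¬ (G.inc e).IsDiag

/-- The degree of a vertex: the number of edges incident with it. -/
noncomputable def degree (G : Multigraph V E) (v : V) : ℕ :=
  {e : E | v ∈ G.inc e}.ncard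

/-- The vertices incident with some edge of `W`: the vertex set of `G[W]`. -/
def supp (G : Multigraph V E) (W : Set E) : Set V :=
  {v | ∃ e ∈ W, v ∈ G.inc e}

/-- Edges `e` and `f` lie in the same component of `G[W]`. -/
def EdgeConn (G : Multigraph V E) (W : Set E) (e f : E) : Prop :=
  ∃ u v : V, u ∈ G.inc e ∧ v ∈ G.inc f ∧ G.Reach W u v

/-- Every component of `G[W]` is a star whose center lies in `C`. -/
def StarComponents (G : Multigraph V E) (W : Set E) (C : Set V) : Prop :=
  ∀ e ∈ W, ∃ w ∈ C, ∀ f ∈ W, G.EdgeConn W e f →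
    (w ∈ G.inc f ∧ ¬ (G.inc f).IsDiag ∧
      ∀ g ∈ W, G.EdgeConn W e g → G.inc g = G.inc f → g = f)

/-- The setoid on `V` identifying the vertices connected by edges of `W`. -/
def contractSetoid (G : Multigraph V E) (W : Set E) : Setoid V where
  r := G.Reach W
  iseqv := ⟨fun _ => Relation.ReflTransGen.refl,
    fun h =>
      haveI : Std.Symm (G.Step W) := ⟨fun _ _ h' => G.step_symm W h'⟩
      Relation.ReflTransGen.symmetric.symm _ _ h,
    fun h h' => Relation.ReflTransGen.trans h h'⟩

/-- The contraction `G/W` of the edges in `W`. -/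
def contract (G : Multigraph V E) (W : Set E) :
    Multigraph (Quotient (G.contractSetoid W)) {e : E // e ∉ W} :=
  ⟨fun e => (G.inc e.val).map (Quotient.mk (G.contractSetoid W))⟩

/-- Deletion `G − D` of the edges in `D`. -/
def deleteEdges (G : Multigraph V E) (D : Set E) : Multigraph V {e : E // e ∉ D} :=
  ⟨fun e => G.inc e.val⟩

/-- The closed neighbourhood `N_G[S]`. -/
def closedNbhd (G : Multigraph V E) (S : Set V) : Set V :=
  S ∪ {v | ∃ u ∈ S, ∃ e : E, G.inc e = s(u, v)}

/-- The induced subgraph `G[A]`, described using a choice `ends` of the pair of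
endpoints of each edge. -/
def induce (G : Multigraph V E) (A : Set V) (ends : E → V × V)
    (hends : ∀ e, G.inc e = s((ends e).1, (ends e).2)) :
    Multigraph A {e : E // e ∈ G.edgesWithin A} :=
  ⟨fun e => s(⟨(ends e.val).1, e.prop _ (by rw [hends]; exact Sym2.mem_mk_left _ _)⟩,
              ⟨(ends e.val).2, e.prop _ (by rw [hends]; exact Sym2.mem_mk_right _ _)⟩)⟩

end Multigraph


open Multigraph

/-- The complete graph `K_n`: one edge for each non-diagonal unordered pair. -/
def completeGraph (n : ℕ) : Multigraph (Fin n) {p : Sym2 (Fin n) // ¬ p.IsDiag} :=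
  ⟨Subtype.val⟩

section helpers
open Classical

theorem reach_symm {V E : Type*} (G : Multigraph V E) (T : Set E) {a b : V}
    (h : G.Reach T a b) : G.Reach T b a := (G.contractSetoid T).symm h

theorem reach_mono {V E : Type*} (G : Multigraph V E) {S T : Set E} (hST : S ⊆ T) {a b : V}
    (h : G.Reach S a b) : G.Reach T a b := by
  have hle : G.Step S ≤ G.Step T := by
    rintro x y ⟨e, he, h⟩
    exact ⟨e, hST he, h⟩
  exact Relation.ReflTransGen.mono hle a b h

theorem reach_insert {V E : Type*} (G : Multigraph V E) (T : Set E) (e : E) (u v : V)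
    (he : G.inc e = s(u, v)) (a b : V) :
    G.Reach (insert e T) a b ↔ G.Reach T a b ∨ (G.Reach T a u ∧ G.Reach T v b) ∨
      (G.Reach T a v ∧ G.Reach T u b) := by
  constructor
  · intro h
    induction h with
    | refl => exact Or.inl Relation.ReflTransGen.refl
    | @tail x y hx hxy ih =>
      obtain ⟨f, hf, hfi⟩ := hxy
      rcases hf with rfl | hf
      · rw [he, Sym2.eq_iff] at hfi
        rcases hfi with ⟨rfl, rfl⟩ | ⟨rfl, rfl⟩
        · rcases ih with h | ⟨h, h'⟩ | ⟨h, h'⟩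
          · exact Or.inr (Or.inl ⟨h, Relation.ReflTransGen.refl⟩)
          · exact Or.inr (Or.inl ⟨h, Relation.ReflTransGen.refl⟩)
          · exact Or.inl h
        · rcases ih with h | ⟨h, h'⟩ | ⟨h, h'⟩
          · exact Or.inr (Or.inr ⟨h, Relation.ReflTransGen.refl⟩)
          · exact Or.inl h
          · exact Or.inr (Or.inr ⟨h, Relation.ReflTransGen.refl⟩)
      · have st : G.Step T x y := ⟨f, hf, hfi⟩
        rcases ih with h | ⟨h, h'⟩ | ⟨h, h'⟩
        · exact Or.inl (h.tail st)
        · exact Or.inr (Or.inl ⟨h, h'.tail st⟩)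
        · exact Or.inr (Or.inr ⟨h, h'.tail st⟩)
  · have m : ∀ {a b}, G.Reach T a b → G.Reach (insert e T) a b :=
      fun h => reach_mono G (Set.subset_insert e T) h
    have s1 : G.Step (insert e T) u v := ⟨e, Set.mem_insert _ _, he⟩
    rintro (h | ⟨h, h'⟩ | ⟨h, h'⟩)
    · exact m h
    · exact ((m h).tail s1).trans (m h')
    · exact ((m h).tail (G.step_symm _ s1)).trans (m h')

/-- `comp` labels the components of `T`. -/
def Lab {V E ι : Type} (G : Multigraph V E) (T : Set E) (comp : V → ι) : Prop :=
  Function.Surjective comp ∧ ∀ u v, comp u = comp v ↔ G.Reach T u v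

theorem lab_mk {V E : Type} (G : Multigraph V E) (T : Set E) :
    Lab G T (Quotient.mk (G.contractSetoid T)) :=
  ⟨Quotient.mk_surjective, fun _ _ => Quotient.eq⟩

theorem lab_card {V E ι κ : Type} {G : Multigraph V E} {T : Set E} {f : V → ι} {g : V → κ}
    (hf : Lab G T f) (hg : Lab G T g) : Nat.card ι = Nat.card κ := by
  choose s hs using hf.1
  apply Nat.card_congr
  refine Equiv.ofBijective (fun i => g (s i)) ⟨?_, ?_⟩
  · intro i j h
    have := (hf.2 _ _).2 ((hg.2 _ _).1 h)
    rwa [hs, hs] at this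
  · intro k
    obtain ⟨v, rfl⟩ := hg.1 k
    refine ⟨f v, ?_⟩
    exact (hg.2 _ _).2 ((hf.2 _ _).1 (hs _))

/-- Merge label `b` into label `a`. -/
noncomputable def mergeLab {V ι : Type} (comp : V → ι) (a b : ι) (hab : a ≠ b) :
    V → {i : ι // i ≠ b} :=
  fun w => if h : comp w = b then ⟨a, hab⟩ else ⟨comp w, h⟩

theorem lab_merge {V E ι : Type} {G : Multigraph V E} {T : Set E} {comp : V → ι}
    (h : Lab G T comp) (e : E) (u v : V) (he : G.inc e = s(u, v)) (huv : comp u ≠ comp v) :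
    Lab G (insert e T) (mergeLab comp (comp u) (comp v) huv) := by
  constructor
  · rintro ⟨i, hi⟩
    obtain ⟨w, rfl⟩ := h.1 i
    exact ⟨w, by simp [mergeLab, hi]⟩
  · intro x y
    rw [reach_insert G T e u v he]
    simp only [← h.2]
    unfold mergeLab
    split_ifs <;> simp only [Subtype.mk.injEq, true_iff] <;> grind

theorem lab_same {V E ι : Type} {G : Multigraph V E} {T : Set E} {comp : V → ι}
    (h : Lab G T comp) (e : E) (u v : V) (he : G.inc e = s(u, v)) (huv : comp u = comp v) :
    Lab G (insert e T) comp := by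
  refine ⟨h.1, fun x y => ?_⟩
  rw [reach_insert G T e u v he]
  simp only [← h.2]
  grind

theorem card_ne {ι : Type} [Fintype ι] (b : ι) :
    Nat.card {i : ι // i ≠ b} + 1 = Nat.card ι := by
  have : 0 < Fintype.card ι := Fintype.card_pos_iff.2 ⟨b⟩
  simp [Fintype.card_subtype_compl]
  omega

theorem card_lab {V E : Type} [Fintype V] [Fintype E] (G : Multigraph V E) (T : Set E) :
    ∀ {ι : Type} (comp : V → ι), Lab G T comp →
      Nat.card V ≤ T.ncard + Nat.card ι ∧ (G.IsForest T → T.ncard + Nat.card ι = Nat.card V) := by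
  induction T, Set.toFinite T using Set.Finite.induction_on with
  | empty =>
    intro ι comp h
    have : Nat.card V = Nat.card ι := by
      apply Nat.card_congr (Equiv.ofBijective comp ⟨?_, h.1⟩)
      intro x y hxy
      rcases Relation.ReflTransGen.cases_head ((h.2 x y).1 hxy) with h | ⟨c, ⟨e, he, _⟩, _⟩
      · exact h
      · exact he.elim
    rw [this]
    simp
  | @insert e T heT _ ih =>
    intro ι comp h
    have hq := lab_mk G T
    obtain ⟨i1, i2⟩ := ih _ hq
    rw [Set.ncard_insert_of_notMem heT]
    obtain ⟨u, v, he⟩ : ∃ u v, G.inc e = s(u, v) := by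
      induction hx : G.inc e with | _ u v => exact ⟨u, v, rfl⟩
    haveI : Fintype (Quotient (G.contractSetoid T)) := Fintype.ofFinite _
    by_cases huv : (Quotient.mk (G.contractSetoid T) u) = Quotient.mk (G.contractSetoid T) v
    · have := lab_card h (lab_same hq e u v he huv)
      refine ⟨by omega, fun hF => ?_⟩
      have := (hF e (Set.mem_insert _ _)).2 u v he
      rw [Set.insert_diff_self_of_notMem heT] at this
      exact (this ((hq.2 _ _).1 huv)).elim
    · have h1 := lab_card h (lab_merge hq e u v he huv)
      have h2 := card_ne (Quotient.mk (G.contractSetoid T) v)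
      refine ⟨by omega, fun hF => ?_⟩
      have := i2 (fun f hf => ⟨(hF f (Set.mem_insert_of_mem _ hf)).1, fun x y hxy hr =>
        (hF f (Set.mem_insert_of_mem _ hf)).2 x y hxy (reach_mono G (by
          exact Set.diff_subset_diff_left (Set.subset_insert _ _)) hr)⟩)
      omega

/-- number of vertices with a label -/
noncomputable def sz {V ι : Type} [Fintype V] (comp : V → ι) (i : ι) : ℕ :=
  (Finset.univ.filter (fun v => comp v = i)).card

theorem sz_pos {V ι : Type} [Fintype V] (comp : V → ι) (v : V) : 0 < sz comp (comp v) :=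
  Finset.card_pos.2 ⟨v, by simp⟩

theorem sz_merge {V ι : Type} [Fintype V] (comp : V → ι) (a b : ι) (hab : a ≠ b)
    (i : {i : ι // i ≠ b}) :
    sz (mergeLab comp a b hab) i = if i.1 = a then sz comp a + sz comp b else sz comp i.1 := by
  obtain ⟨i, hi⟩ := i
  unfold sz
  split_ifs with h
  · simp only at h
    subst h
    rw [← Finset.card_union_of_disjoint]
    · congr 1
      ext w
      simp only [Finset.mem_filter, Finset.mem_univ, true_and, Finset.mem_union]
      unfold mergeLab
      split_ifs <;> simp_all
    · rw [Finset.disjoint_left]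
      intro w
      simp
      grind
  · congr 1
    ext w
    simp only [Finset.mem_filter, Finset.mem_univ, true_and]
    unfold mergeLab
    simp only at h
    split_ifs <;> simp <;> grind

theorem prod_merge {V ι : Type} [Fintype V] [Fintype ι] (comp : V → ι) (a b : ι) (hab : a ≠ b)
    (ha : 0 < sz comp a) (hb : 0 < sz comp b) :
    (∏ i, (sz (mergeLab comp a b hab) i : ℚ)) =
      (∏ i, (sz comp i : ℚ)) * ((sz comp a : ℚ)⁻¹ + (sz comp b : ℚ)⁻¹) := by
  have ha' : (sz comp a : ℚ) ≠ 0 := by positivity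
  have hb' : (sz comp b : ℚ) ≠ 0 := by positivity
  simp only [sz_merge]
  have : (∏ i : {i : ι // i ≠ b},
      (((if i.1 = a then sz comp a + sz comp b else sz comp i.1 : ℕ)) : ℚ)) =
      ∏ i ∈ Finset.univ.erase b, ((if i = a then sz comp a + sz comp b else sz comp i : ℕ) : ℚ) := by
    symm
    apply Finset.prod_subtype
    simp
  rw [this, ← Finset.mul_prod_erase (Finset.univ.erase b) _ (a := a) (by simp [hab]),
    ← Finset.mul_prod_erase Finset.univ _ (a := b) (by simp),
    ← Finset.mul_prod_erase (Finset.univ.erase b) (fun i => (sz comp i : ℚ)) (a := a)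
      (by simp [hab])]
  have : ∏ i ∈ (Finset.univ.erase b).erase a,
      ((if i = a then sz comp a + sz comp b else sz comp i : ℕ) : ℚ) =
      ∏ i ∈ (Finset.univ.erase b).erase a, (sz comp i : ℚ) := by
    apply Finset.prod_congr rfl
    intro i hi
    rw [if_neg (Finset.ne_of_mem_erase hi)]
  rw [this]
  simp
  field_simp
  ring

/-- crossing edges -/
noncomputable def crossing {n : ℕ} {ι : Type} (comp : Fin n → ι) :
    Finset {p : Sym2 (Fin n) // ¬ p.IsDiag} :=
  Finset.univ.filter (fun e => ∃ u v, e.1 = s(u, v) ∧ comp u ≠ comp v)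

theorem crossing_deg {n : ℕ} {ι : Type} (comp : Fin n → ι) (w : Fin n) :
    ((crossing comp).filter (fun e => w ∈ e.1)).card + sz comp (comp w) = n := by
  have h : ((crossing comp).filter (fun e => w ∈ e.1)).card =
      (Finset.univ.filter (fun v => ¬ comp v = comp w)).card := by
    symm
    refine Finset.card_bij (fun v hv => ⟨s(w, v), ?_⟩) ?_ ?_ ?_
    · rw [Sym2.mk_isDiag_iff]
      rintro rfl
      simp at hv
    · intro v hv
      simp only [crossing, Finset.mem_filter, Finset.mem_univ, true_and] at hv ⊢
      exact ⟨⟨w, v, rfl, fun h => hv h.symm⟩, Sym2.mem_mk_left _ _⟩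
    · intro v _ v' _ h
      simp at h
      grind
    · rintro ⟨e, he⟩ hh
      simp only [crossing, Finset.mem_filter, Finset.mem_univ, true_and] at hh
      obtain ⟨⟨u, v, rfl, huv⟩, hw⟩ := hh
      rw [Sym2.mem_iff] at hw
      rcases hw with rfl | rfl
      · exact ⟨v, by simpa using fun h => huv h.symm, rfl⟩
      · exact ⟨u, by simpa using huv, Subtype.ext Sym2.eq_swap⟩
  rw [h, sz, add_comm, Finset.card_filter_add_card_filter_not]
  simp

theorem sum_inv {n : ℕ} {ι : Type} [Fintype ι] (comp : Fin n → ι)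
    (hs : Function.Surjective comp) :
    ∑ w, ((sz comp (comp w) : ℚ)⁻¹) = Fintype.card ι := by
  rw [← Finset.sum_fiberwise_of_maps_to (g := comp) (t := Finset.univ) (by simp)]
  rw [Finset.sum_congr rfl (g := fun _ => (1 : ℚ))]
  · simp
  · intro i _
    rw [Finset.sum_congr rfl (g := fun _ => (sz comp i : ℚ)⁻¹)]
    · obtain ⟨v, rfl⟩ := hs i
      have := sz_pos comp v
      rw [Finset.sum_const, nsmul_eq_mul]
      change (sz comp (comp v) : ℚ) * _ = 1
      field_simp
    · intro w hw
      simp at hw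
      rw [hw]

theorem sum_crossing {n : ℕ} {ι : Type} [Fintype ι] (comp : Fin n → ι)
    (hs : Function.Surjective comp) :
    ∑ e ∈ crossing comp, ∑ w ∈ Finset.univ.filter (fun w => w ∈ e.1), ((sz comp (comp w) : ℚ)⁻¹)
      = n * ((Fintype.card ι : ℚ) - 1) := by
  simp only [Finset.sum_filter]
  rw [Finset.sum_comm]
  have : ∀ w, (∑ e ∈ crossing comp, if w ∈ e.1 then ((sz comp (comp w) : ℚ)⁻¹) else 0) =
      n * (sz comp (comp w) : ℚ)⁻¹ - 1 := by
    intro w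
    rw [← Finset.sum_filter, Finset.sum_const, nsmul_eq_mul]
    have h := crossing_deg comp w
    have h2 := sz_pos comp w
    have h3 : (((crossing comp).filter (fun e => w ∈ e.1)).card : ℚ) = n - sz comp (comp w) := by
      rw [eq_sub_iff_add_eq]
      exact_mod_cast h
    rw [h3]
    field_simp
  simp only [this]
  rw [Finset.sum_sub_distrib, ← Finset.mul_sum, sum_inv comp hs]
  simp
  ring

theorem tree_edge_crossing {n : ℕ} {ι : Type} {comp : Fin n → ι}
    {M T : Set {p : Sym2 (Fin n) // ¬ p.IsDiag}} (h : Lab (completeGraph n) M comp)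
    (hT : T ∈ (completeGraph n).ST M) (e) (heT : e ∈ T) : e ∈ crossing comp ↔ e ∉ M := by
  obtain ⟨⟨hc, hcard⟩, hMT⟩ := hT
  simp only [crossing, Finset.mem_filter, Finset.mem_univ, true_and]
  constructor
  · rintro ⟨u, v, huv, hne⟩ heM
    exact hne ((h.2 u v).2 (Relation.ReflTransGen.single ⟨e, heM, huv⟩))
  · intro heM
    obtain ⟨u, v, he⟩ : ∃ u v, e.1 = s(u, v) := by
      induction hx : e.1 with | _ u v => exact ⟨u, v, rfl⟩
    refine ⟨u, v, he, fun hne => ?_⟩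
    have hsub : M ⊆ T \ {e} := fun f hf =>
      ⟨hMT hf, fun hfe => heM (by rw [← Set.mem_singleton_iff.1 hfe]; exact hf)⟩
    have hr : (completeGraph n).Reach (T \ {e}) u v :=
      reach_mono _ hsub ((h.2 u v).1 hne)
    have hl : Lab (completeGraph n) (T \ {e}) (fun _ : Fin n => ()) := by
      refine ⟨fun _ => ⟨u, rfl⟩, fun x y => ⟨fun _ => ?_, fun _ => rfl⟩⟩
      have := hc x y
      rw [← Set.insert_diff_self_of_mem heT, reach_insert _ _ e u v he] at this
      rcases this with h | ⟨h, h'⟩ | ⟨h, h'⟩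
      · exact h
      · exact (h.trans hr).trans h'
      · exact (h.trans (reach_symm _ _ hr)).trans h'
    have h1 := (card_lab _ _ _ hl).1
    have h2 := Set.ncard_diff_singleton_add_one heT
    simp at h1 hcard
    omega

theorem double_count {n : ℕ} {ι : Type} [Fintype ι] {comp : Fin n → ι}
    {M : Set {p : Sym2 (Fin n) // ¬ p.IsDiag}} (h : Lab (completeGraph n) M comp) (k : ℕ)
    (hk : M.ncard + k + 1 = n) :
    (completeGraph n).tau M * k = ∑ e ∈ crossing comp, (completeGraph n).tau (insert e M) := by
  have := Finset.sum_card_bipartiteAbove_eq_sum_card_bipartiteBelow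
    (s := ((completeGraph n).ST M).toFinset) (t := crossing comp) (fun T e => e ∈ T)
  rw [Finset.sum_congr rfl (g := fun _ => k)] at this
  · rw [Finset.sum_const, smul_eq_mul] at this
    rw [tau, Set.ncard_eq_toFinset_card', this]
    apply Finset.sum_congr rfl
    intro e he
    rw [tau, Set.ncard_eq_toFinset_card']
    congr 1
    ext T
    simp only [Finset.bipartiteBelow, Finset.mem_filter, Set.mem_toFinset]
    simp only [Multigraph.ST, Set.mem_setOf_eq, Set.insert_subset_iff]
    tauto
  · intro T hT
    rw [Set.mem_toFinset] at hT
    have h1 : (crossing comp).bipartiteAbove (fun T e => e ∈ T) T = (T \ M).toFinset := by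
      ext e
      simp only [Finset.bipartiteAbove, Finset.mem_filter, Set.mem_toFinset, Set.mem_diff]
      constructor
      · rintro ⟨a, b⟩
        exact ⟨b, (tree_edge_crossing h hT e b).1 a⟩
      · rintro ⟨a, b⟩
        exact ⟨(tree_edge_crossing h hT e a).2 b, a⟩
    rw [h1, ← Set.ncard_eq_toFinset_card']
    have h2 := Set.ncard_diff_add_ncard_of_subset hT.2 (Set.toFinite T)
    have h3 := hT.1.2
    simp at h3
    omega

theorem main_count {n : ℕ} (k : ℕ) : ∀ {ι : Type} [Fintype ι] (comp : Fin n → ι)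
    (M : Set {p : Sym2 (Fin n) // ¬ p.IsDiag}) (_ : Lab (completeGraph n) M comp)
    (_ : M.ncard + k + 1 = n) (_ : Fintype.card ι = k + 1),
    ((completeGraph n).tau M : ℚ) * n = n ^ k * ∏ i, (sz comp i : ℚ) := by
  induction k with
  | zero =>
    intro ι _ comp M h hM hι
    obtain ⟨i, hi⟩ := Fintype.card_eq_one_iff.1 hι
    have h1 : (completeGraph n).ST M = {M} := by
      ext T
      simp only [Set.mem_singleton_iff]
      constructor
      · rintro ⟨⟨h1, h2⟩, h3⟩
        simp at h2
        exact (Set.eq_of_subset_of_ncard_le h3 (by omega) (Set.toFinite _)).symm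
      · rintro rfl
        exact ⟨⟨fun u v => (h.2 u v).1 ((hi _).trans (hi _).symm), by simp; omega⟩, subset_rfl⟩
    have h2 : ∀ j, sz comp j = n := by
      intro j
      simp [sz, hi]
    simp [tau, h1, h2, hι]
  | succ k ih =>
    intro ι _ comp M h hM hι
    have hd := double_count h (k + 1) hM
    have hd' : ((completeGraph n).tau M : ℚ) * ((k : ℚ) + 1) =
      ∑ e ∈ crossing comp, ((completeGraph n).tau (insert e M) : ℚ) := by exact_mod_cast hd
    have hs : ∀ e ∈ crossing comp, ((completeGraph n).tau (insert e M) : ℚ) * n =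
        (n ^ k * ∏ i, (sz comp i : ℚ)) *
        ∑ w ∈ Finset.univ.filter (fun w => w ∈ e.1), ((sz comp (comp w) : ℚ)⁻¹) := by
      intro e he
      simp only [crossing, Finset.mem_filter, Finset.mem_univ, true_and] at he
      obtain ⟨u, v, huv, hne⟩ := he
      have heM : e ∉ M := fun heM =>
        hne ((h.2 u v).2 (Relation.ReflTransGen.single ⟨e, heM, huv⟩))
      have hc := card_ne (comp v)
      simp only [Nat.card_eq_fintype_card] at hc
      rw [ih _ _ (lab_merge h e u v huv hne)
        (by rw [Set.ncard_insert_of_notMem heM]; omega) (by omega),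
        prod_merge _ _ _ _ (sz_pos _ _) (sz_pos _ _)]
      have : Finset.univ.filter (fun w => w ∈ e.1) = {u, v} := by
        ext w; simp [huv]
      rw [this, Finset.sum_pair (fun h => hne (by rw [h]))]
      ring
    have hk : ((k : ℚ) + 1) ≠ 0 := by positivity
    apply mul_right_cancel₀ hk
    calc _ = (((completeGraph n).tau M : ℚ) * ((k : ℚ) + 1)) * n := by ring
      _ = _ := by
        rw [hd', Finset.sum_mul, Finset.sum_congr rfl hs, ← Finset.mul_sum,
          sum_crossing comp h.1, hι]
        push_cast
        ring

end helpers

/-- Lovász, Moon: if `M` spans a forest with `c` components of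
orders `n₁, …, n_c` in `K_n`, then `τ_{K_n}(M) = n^{c-2} ∏ᵢ nᵢ`. -/
theorem tau_completeGraph_of_forest (n c : ℕ) (hn : 1 ≤ n)
    (M : Set {p : Sym2 (Fin n) // ¬ p.IsDiag})
    (hforest : (completeGraph n).IsForest M)
    (comp : Fin n → Fin c) (hsurj : Function.Surjective comp)
    (hcomp : ∀ u v : Fin n, comp u = comp v ↔ (completeGraph n).Reach M u v)
    (sizes : Fin c → ℕ)
    (hsizes : ∀ i, sizes i = {v : Fin n | comp v = i}.ncard) :
    ((completeGraph n).tau M : ℚ) =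
      (n : ℚ) ^ ((c : ℤ) - 2) * ∏ i : Fin c, (sizes i : ℚ) := by
  have hl : Lab (completeGraph n) M comp := ⟨hsurj, hcomp⟩
  have hcard := (card_lab _ _ _ hl).2 hforest
  simp only [Nat.card_eq_fintype_card, Fintype.card_fin] at hcard
  have hc : 0 < c := (comp ⟨0, hn⟩).pos
  obtain ⟨k, rfl⟩ : ∃ k, c = k + 1 := ⟨c - 1, by omega⟩
  have hm := main_count k comp M hl (by omega) (by simp)
  have hsz : ∀ i, sizes i = sz comp i := by
    intro i
    classical
    rw [hsizes, Set.ncard_eq_toFinset_card', sz]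
    congr 1
    ext v
    simp
  have hn' : (n : ℚ) ≠ 0 := by positivity
  simp only [hsz]
  apply mul_right_cancel₀ hn'
  rw [hm, show (((k + 1 : ℕ) : ℤ) - 2) = (k : ℤ) - 1 by push_cast; ring, zpow_sub_one₀ hn',
    zpow_natCast]
  field_simp

end PaperST
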